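/- (Theorem 4) Suppose g is continuous, monotone in the sense ⟨g(y₁) − g(y₂), y₁ − y₂⟩ ≤ 0 for all y₁, y₂ ∈ Ω, and L-Lipschitz: ‖g(y₁) − g(y₂)‖ ≤ L‖y₁ − y₂‖ for all y₁, y₂ ∈ Ω. Suppose some y* ∈ Ω solves the variational inequality ⟨g(y*), y − y*⟩ ≤ 0 for all y ∈ Ω, and it is the unique such solution. Let 0 < t < (√2·L)⁻¹ and define the extra pseudo-gradient sequence ŷ_s = P_Ω(y_s + t·g(y_s)), y_{s+1} = P_Ω(y_s + t·g(ŷ_s)) from any y₀ ∈ Ω. Then the sequence (y_s) converges and lim_{s→∞} y_s = y*. -/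

import Mathlib

open Matrix Filter
open scoped BigOperators

noncomputable section

/-- Vectors in ℝ^k. -/
abbrev Vec (k : ℕ) := Fin k → ℝ

/-- Standard Euclidean inner product on ℝ^k. -/
def ip {k : ℕ} (u v : Vec k) : ℝ := ∑ i, u i * v i

/-- Standard Euclidean norm on ℝ^k. -/
def nrm {k : ℕ} (u : Vec k) : ℝ := Real.sqrt (ip u u)

/-- The space ℝⁿ × ℝⁿ × ℝᵐ of triples y = (x, λ, v). -/
abbrev Triple (n m : ℕ) := Vec n × Vec n × Vec m

/-- Euclidean inner product on the triple space. -/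
def ipT {n m : ℕ} (y z : Triple n m) : ℝ :=
  ip y.1 z.1 + ip y.2.1 z.2.1 + ip y.2.2 z.2.2

/-- Euclidean norm on the triple space. -/
def nrmT {n m : ℕ} (y : Triple n m) : ℝ := Real.sqrt (ipT y y)

/-- Ω = ℝ₊ⁿ × ℝ₊ⁿ × ℝ₊ᵐ. -/
def Om (n m : ℕ) : Set (Triple n m) :=
  {y | (∀ j, 0 ≤ y.1 j) ∧ (∀ j, 0 ≤ y.2.1 j) ∧ (∀ i, 0 ≤ y.2.2 i)}

/-- The operator g(x, λ, v) = ((I − A)ᵀλ − p(x) − Bᵀv, c(λ) − (I − A)x, Bx − r(v)). -/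
def gOp {n m : ℕ} (A : Matrix (Fin n) (Fin n) ℝ) (B : Matrix (Fin m) (Fin n) ℝ)
    (p c : Vec n → Vec n) (r : Vec m → Vec m) (y : Triple n m) : Triple n m :=
  ((1 - A)ᵀ *ᵥ y.2.1 - p y.1 - Bᵀ *ᵥ y.2.2,
   c y.2.1 - (1 - A) *ᵥ y.1,
   B *ᵥ y.1 - r y.2.2)

/-- P_Ω : componentwise positive part (Euclidean projection onto Ω). -/
def projOm {n m : ℕ} (y : Triple n m) : Triple n m :=
  (fun j => max (y.1 j) 0, fun j => max (y.2.1 j) 0, fun i => max (y.2.2 i) 0)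

lemma ip_add_left' {k : ℕ} (u v w : Vec k) : ip (u + v) w = ip u w + ip v w := by
  simp [ip, add_mul, Finset.sum_add_distrib]

lemma ip_smul_left' {k : ℕ} (a : ℝ) (u w : Vec k) : ip (a • u) w = a * ip u w := by
  simp [ip, Finset.mul_sum, mul_assoc]

lemma ip_comm' {k : ℕ} (u w : Vec k) : ip u w = ip w u := by
  simp [ip, mul_comm]

lemma ip_self_nonneg' {k : ℕ} (u : Vec k) : 0 ≤ ip u u :=
  Finset.sum_nonneg fun i _ => mul_self_nonneg _

lemma sq_le_ip {k : ℕ} (u : Vec k) (i : Fin k) : u i * u i ≤ ip u u :=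
  Finset.single_le_sum (f := fun i => u i * u i) (fun i _ => mul_self_nonneg _) (Finset.mem_univ i)

lemma ipT_add_left {n m : ℕ} (u v w : Triple n m) : ipT (u + v) w = ipT u w + ipT v w := by
  simp only [ipT, Prod.fst_add, Prod.snd_add, ip_add_left']; ring

lemma ipT_smul_left {n m : ℕ} (a : ℝ) (u w : Triple n m) : ipT (a • u) w = a * ipT u w := by
  simp only [ipT, Prod.smul_fst, Prod.smul_snd, ip_smul_left']; ring

lemma ipT_comm {n m : ℕ} (u w : Triple n m) : ipT u w = ipT w u := by
  simp only [ipT, ip_comm' u.1, ip_comm' u.2.1, ip_comm' u.2.2]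

lemma ipT_sub_left {n m : ℕ} (u v w : Triple n m) : ipT (u - v) w = ipT u w - ipT v w := by
  have := ipT_add_left (u - v) v w
  rw [sub_add_cancel] at this; linarith

lemma ipT_add_right {n m : ℕ} (u v w : Triple n m) : ipT w (u + v) = ipT w u + ipT w v := by
  rw [ipT_comm, ipT_add_left, ipT_comm u, ipT_comm v]

lemma ipT_sub_right {n m : ℕ} (u v w : Triple n m) : ipT w (u - v) = ipT w u - ipT w v := by
  rw [ipT_comm, ipT_sub_left, ipT_comm u, ipT_comm v]

lemma ipT_smul_right {n m : ℕ} (a : ℝ) (u w : Triple n m) : ipT w (a • u) = a * ipT w u := by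
  rw [ipT_comm, ipT_smul_left, ipT_comm u]

lemma ipT_self_nonneg {n m : ℕ} (u : Triple n m) : 0 ≤ ipT u u := by
  have h1 := ip_self_nonneg' u.1
  have h2 := ip_self_nonneg' u.2.1
  have h3 := ip_self_nonneg' u.2.2
  unfold ipT; linarith

lemma norm_le_nrmT {n m : ℕ} (u : Triple n m) : ‖u‖ ≤ nrmT u := by
  have h1 := ip_self_nonneg' u.1
  have h2 := ip_self_nonneg' u.2.1
  have h3 := ip_self_nonneg' u.2.2
  have h0 : 0 ≤ nrmT u := Real.sqrt_nonneg _
  rw [Prod.norm_def, Prod.norm_def]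
  refine max_le ?_ (max_le ?_ ?_)
  · refine (pi_norm_le_iff_of_nonneg h0).2 fun i => Real.abs_le_sqrt ?_
    have := sq_le_ip u.1 i
    unfold ipT; nlinarith
  · refine (pi_norm_le_iff_of_nonneg h0).2 fun i => Real.abs_le_sqrt ?_
    have := sq_le_ip u.2.1 i
    unfold ipT; nlinarith
  · refine (pi_norm_le_iff_of_nonneg h0).2 fun i => Real.abs_le_sqrt ?_
    have := sq_le_ip u.2.2 i
    unfold ipT; nlinarith

lemma ipT_self_eq_zero {n m : ℕ} (u : Triple n m) (h : ipT u u = 0) : u = 0 := by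
  have := norm_le_nrmT u
  rw [nrmT, h, Real.sqrt_zero] at this
  exact norm_le_zero_iff.1 this

lemma projOm_mem {n m : ℕ} (z : Triple n m) : projOm z ∈ Om n m :=
  ⟨fun _ => le_max_right _ _, fun _ => le_max_right _ _, fun _ => le_max_right _ _⟩

lemma real_proj (a w : ℝ) (hw : 0 ≤ w) : (a - max a 0) * (w - max a 0) ≤ 0 := by
  rcases le_total a 0 with h | h
  · rw [max_eq_right h]; nlinarith
  · rw [max_eq_left h]; simp

lemma projOm_var {n m : ℕ} (z w : Triple n m) (hw : w ∈ Om n m) :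
    ipT (z - projOm z) (w - projOm z) ≤ 0 := by
  obtain ⟨h1, h2, h3⟩ := hw
  have a1 : ip (z - projOm z).1 (w - projOm z).1 ≤ 0 :=
    Finset.sum_nonpos fun i _ => real_proj _ _ (h1 i)
  have a2 : ip (z - projOm z).2.1 (w - projOm z).2.1 ≤ 0 :=
    Finset.sum_nonpos fun i _ => real_proj _ _ (h2 i)
  have a3 : ip (z - projOm z).2.2 (w - projOm z).2.2 ≤ 0 :=
    Finset.sum_nonpos fun i _ => real_proj _ _ (h3 i)
  unfold ipT; linarith

lemma continuous_projOm {n m : ℕ} : Continuous (projOm : Triple n m → Triple n m) := by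
  unfold projOm; fun_prop

lemma continuous_ipT_self {n m : ℕ} : Continuous (fun u : Triple n m => ipT u u) := by
  unfold ipT ip; fun_prop

lemma step {n m : ℕ} (y yh yn ys gy gh gs : Triple n m) (t K : ℝ) (ht : 0 < t)
    (hyn : yn ∈ Om n m) (hys : ys ∈ Om n m)
    (e1 : yh = projOm (y + t • gy)) (e2 : yn = projOm (y + t • gh))
    (hm : ipT (gh - gs) (yh - ys) ≤ 0) (hv : ipT gs (yh - ys) ≤ 0)
    (hl : ipT (gy - gh) (gy - gh) ≤ K * ipT (y - yh) (y - yh)) :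
    ipT (yn - ys) (yn - ys) ≤ ipT (y - ys) (y - ys) - (1 - t ^ 2 * K) * ipT (y - yh) (y - yh) := by
  have a1 := projOm_var (y + t • gy) yn hyn
  have a2 := projOm_var (y + t • gh) ys hys
  rw [← e1] at a1
  rw [← e2] at a2
  clear e1 e2
  have a3 := ipT_self_nonneg (t • (gh - gy) - (yn - yh))
  have a4 : t * ipT gh (yh - ys) ≤ 0 := by
    rw [ipT_sub_left] at hm
    exact mul_nonpos_of_nonneg_of_nonpos ht.le (by linarith)
  have a5 := mul_le_mul_of_nonneg_left hl (sq_nonneg t)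
  clear hm hv hl
  simp only [ipT_add_left, ipT_sub_left, ipT_smul_left, ipT_add_right, ipT_sub_right,
    ipT_smul_right] at *
  have c := @ipT_comm n m
  simp only [c yh y, c yn y, c ys y, c yn yh, c ys yn, c gh gy, c yn gh, c yh gh, c yn gy,
    c yh gy] at a1 a2 a3 a4 a5 ⊢
  linarith

/-- Theorem 4: if g is continuous, monotone and L-Lipschitz on Ω, y* ∈ Ω
is the unique VI solution, and 0 < t < (√2·L)⁻¹, then the extra pseudo-gradient
sequence converges to y*. -/
theorem stmt16 {n m : ℕ} (hn : 0 < n) (hm : 0 < m)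
    (A : Matrix (Fin n) (Fin n) ℝ) (B : Matrix (Fin m) (Fin n) ℝ)
    (p c : Vec n → Vec n) (r : Vec m → Vec m)
    (hcont : Continuous (gOp A B p c r))
    (L : ℝ)
    (hmono : ∀ y₁ ∈ Om n m, ∀ y₂ ∈ Om n m,
      ipT (gOp A B p c r y₁ - gOp A B p c r y₂) (y₁ - y₂) ≤ 0)
    (hlip : ∀ y₁ ∈ Om n m, ∀ y₂ ∈ Om n m,
      nrmT (gOp A B p c r y₁ - gOp A B p c r y₂) ≤ L * nrmT (y₁ - y₂))
    (ys : Triple n m) (hys : ys ∈ Om n m)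
    (hVI : ∀ y ∈ Om n m, ipT (gOp A B p c r ys) (y - ys) ≤ 0)
    (huniq : ∀ y' ∈ Om n m, (∀ y ∈ Om n m, ipT (gOp A B p c r y') (y - y') ≤ 0) → y' = ys)
    (t : ℝ) (ht0 : 0 < t) (ht1 : t < (Real.sqrt 2 * L)⁻¹)
    (y yh : ℕ → Triple n m) (hy0 : y 0 ∈ Om n m)
    (hyh : ∀ s : ℕ, yh s = projOm (y s + t • gOp A B p c r (y s)))
    (hiter : ∀ s : ℕ, y (s + 1) = projOm (y s + t • gOp A B p c r (yh s))) :
    Tendsto y atTop (nhds ys) := by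
  set g := gOp A B p c r with hg
  have hL : 0 < L := by
    have h : 0 < (Real.sqrt 2 * L)⁻¹ := ht0.trans ht1
    have h2 : 0 < Real.sqrt 2 := by positivity
    exact (pos_iff_pos_of_mul_pos (inv_pos.1 h)).1 h2
  have hq : 0 < 1 - t ^ 2 * L ^ 2 := by
    have h2 : (1:ℝ) ≤ Real.sqrt 2 := Real.one_le_sqrt.2 (by norm_num)
    have h3 : t * (Real.sqrt 2 * L) < 1 := by
      rwa [lt_inv_comm₀ ht0 (by positivity), inv_eq_one_div, lt_div_iff₀ ht0, mul_comm] at ht1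
    have h4 : t * L < 1 := by
      have : t * L * 1 ≤ t * L * Real.sqrt 2 := mul_le_mul_of_nonneg_left h2 (by positivity)
      nlinarith
    have h5 : 0 < t * L := by positivity
    nlinarith
  have hyM : ∀ s, y s ∈ Om n m := by
    intro s
    cases s with
    | zero => exact hy0
    | succ s => rw [hiter]; exact projOm_mem _
  have hhM : ∀ s, yh s ∈ Om n m := fun s => by rw [hyh]; exact projOm_mem _
  have hstep : ∀ s, ipT (y (s+1) - ys) (y (s+1) - ys) ≤ ipT (y s - ys) (y s - ys)
      - (1 - t ^ 2 * L ^ 2) * ipT (y s - yh s) (y s - yh s) := by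
    intro s
    refine step (y s) (yh s) (y (s+1)) ys (g (y s)) (g (yh s)) (g ys) t (L^2) ht0 (hyM _) hys
      (hyh s) (hiter s) (hmono _ (hhM s) _ hys) (hVI _ (hhM s)) ?_
    have h := hlip _ (hyM s) _ (hhM s)
    have h' := pow_le_pow_left₀ (Real.sqrt_nonneg _) h 2
    rw [mul_pow] at h'
    unfold nrmT at h'
    rwa [Real.sq_sqrt (ipT_self_nonneg _), Real.sq_sqrt (ipT_self_nonneg _)] at h'
  set D : ℕ → ℝ := fun s => ipT (y s - ys) (y s - ys) with hD
  have hanti : Antitone D := antitone_nat_of_succ_le fun s => by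
    have := mul_nonneg hq.le (ipT_self_nonneg (y s - yh s))
    have := hstep s
    simp only [hD]; linarith
  have hDlim := tendsto_atTop_ciInf hanti ⟨0, by rintro _ ⟨s, rfl⟩; exact ipT_self_nonneg _⟩
  have hdiff : Tendsto (fun s => (D s - D (s+1)) / (1 - t ^ 2 * L ^ 2)) atTop (nhds 0) := by
    have := (hDlim.sub (hDlim.comp (tendsto_add_atTop_nat 1))).div_const (1 - t ^ 2 * L ^ 2)
    simpa using this
  have hE : Tendsto (fun s => ipT (y s - yh s) (y s - yh s)) atTop (nhds 0) := by
    refine squeeze_zero (fun s => ipT_self_nonneg _) (fun s => ?_) hdiff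
    rw [le_div_iff₀ hq]
    have := hstep s
    simp only [hD]; linarith
  have hball : ∀ s, y s ∈ Metric.closedBall ys (Real.sqrt (D 0)) := by
    intro s
    rw [mem_closedBall_iff_norm]
    exact (norm_le_nrmT _).trans (Real.sqrt_le_sqrt (hanti (Nat.zero_le s)))
  refine tendsto_of_subseq_tendsto fun ns hns => ?_
  obtain ⟨a, -, φ, hφ, hlim⟩ := (isCompact_closedBall ys (Real.sqrt (D 0))).tendsto_subseq
    (x := fun k => y (ns k)) (fun k => hball _)
  refine ⟨φ, ?_⟩
  have hF : Continuous (fun z : Triple n m =>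
      ipT (z - projOm (z + t • g z)) (z - projOm (z + t • g z))) :=
    continuous_ipT_self.comp
      (continuous_id.sub (continuous_projOm.comp (continuous_id.add (hcont.const_smul t))))
  have hF1 := (hF.tendsto a).comp hlim
  have hF2 := hE.comp (hns.comp hφ.tendsto_atTop)
  have h0 : ipT (a - projOm (a + t • g a)) (a - projOm (a + t • g a)) = 0 := by
    refine tendsto_nhds_unique hF1 (hF2.congr fun k => ?_)
    simp only [Function.comp, hyh]
  have hfix : a = projOm (a + t • g a) := sub_eq_zero.1 (ipT_self_eq_zero _ h0)
  have haM : a ∈ Om n m := by rw [hfix]; exact projOm_mem _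
  have : a = ys := by
    refine huniq a haM fun w hw => ?_
    have h := projOm_var (a + t • g a) w hw
    rw [← hfix, add_sub_cancel_left, ipT_smul_left] at h
    exact nonpos_of_mul_nonpos_right h ht0
  rw [← this]
  exact hlim
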